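/- Let r be a positive odd integer. Let V be an F-vector space of dimension r+3 and Q a nondegenerate quadratic form on V of Witt defect 2 (an elliptic quadric). Let S be a spread of Q and let W be a hyperplane of V such that the restriction of Q to W is a nondegenerate quadratic form of Witt defect 1 (a parabolic hyperplane section). Then exactly q+1 members of S are contained in W. -/

import Mathlib

/-!
For a generator `G`, every singular vector of `G^⊥` lies in `G`, while off `G^⊥` each value of `Q`
is taken equally often, because translating `v` along `G` moves `Q v` by the nonzero functional
`B(v, ·)|G`. This counts the singular vectors of a nondegenerate form. Since a spread partitions the
nonzero singular vectors and a member not contained in a hyperplane `W` meets it in codimension one,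
counting the singular vectors of `V` gives the size of the spread, and counting those of `W` then
gives the number of members contained in `W`.
-/

open Module Submodule

section Defs

variable {F : Type*} [Field F] {V : Type*} [AddCommGroup V] [Module F V]

/-- A subspace is totally singular if the quadratic form vanishes on it. -/
def IsTotallySingular (Q : QuadraticForm F V) (W : Submodule F V) : Prop :=
  ∀ x ∈ W, Q x = 0

/-- The Witt index: maximal dimension of a totally singular subspace. -/
noncomputable def wittIndex (Q : QuadraticForm F V) : ℕ :=
  sSup {n : ℕ | ∃ W : Submodule F V, IsTotallySingular Q W ∧ Module.finrank F ↥W = n}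

/-- Nondegeneracy: the only singular vector orthogonal to everything is `0`. -/
def QuadNondeg (Q : QuadraticForm F V) : Prop :=
  ∀ v : V, Q v = 0 → (∀ x : V, QuadraticMap.polar Q v x = 0) → v = 0

/-- A generator: totally singular subspace of dimension the Witt index. -/
def IsGenerator (Q : QuadraticForm F V) (G : Submodule F V) : Prop :=
  IsTotallySingular Q G ∧ Module.finrank F ↥G = wittIndex Q

/-- A spread of `Q`. -/
def IsSpread (Q : QuadraticForm F V) (S : Set (Submodule F V)) : Prop :=
  (∀ G ∈ S, IsGenerator Q G) ∧
  (∀ G ∈ S, ∀ G' ∈ S, G ≠ G' → G ⊓ G' = ⊥) ∧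
  (∀ v : V, Q v = 0 → ∃ G ∈ S, v ∈ G)

/-- The perp of a vector with respect to the polar form of `Q`. -/
def vecPerp (Q : QuadraticForm F V) (u : V) : Submodule F V :=
  LinearMap.ker (QuadraticMap.polarBilin Q u)

/-- The perp of a subspace with respect to the polar form of `Q`. -/
def subPerp (Q : QuadraticForm F V) (G : Submodule F V) : Submodule F V :=
  ⨅ g ∈ G, vecPerp Q g

/-- Hyperbolic (e = 0), parabolic (e = 1) or elliptic (e = 2) affine vector space
partition for `(U, H, Q, Pgen)`. -/
def IsAvsp [Fintype F] (e r : ℕ) {U : Type*} [AddCommGroup U] [Module F U]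
    (H : Submodule F U) (Q : QuadraticForm F ↥H) (Pgen : Submodule F ↥H)
    (P : Set (Submodule F U)) : Prop :=
  P.ncard = Fintype.card F ^ ((r + e + 1) / 2) ∧
  (∀ S ∈ P, Module.finrank F ↥S = (r + 3 - e) / 2 ∧ ¬ S ≤ H) ∧
  (∀ L : Submodule F U, Module.finrank F ↥L = 1 → ¬ L ≤ H → ∃! S, S ∈ P ∧ L ≤ S) ∧
  (∀ S ∈ P, IsGenerator Q (S.comap H.subtype) ∧ S.comap H.subtype ⊓ Pgen = ⊥) ∧
  (∀ S ∈ P, ∀ T ∈ P, S ≠ T → S.comap H.subtype ≠ T.comap H.subtype) ∧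
  (∀ S ∈ P, ∀ T ∈ P, S ≠ T → Module.finrank F ↥(S ⊓ T) ≤ 1) ∧
  (∀ S ∈ P, ∀ T ∈ P, S ≠ T →
    Module.finrank F ↥(S.comap H.subtype ⊓ T.comap H.subtype) = 1 →
      QuadNondeg (Q.comp ((S ⊔ T).comap H.subtype).subtype) ∧
      Module.finrank F ↥((S ⊔ T).comap H.subtype) =
        2 * wittIndex (Q.comp ((S ⊔ T).comap H.subtype).subtype))

end Defs

section Development

variable {F : Type*} [Field F] {V : Type*} [AddCommGroup V] [Module F V]
variable {Q : QuadraticForm F V} {G W : Submodule F V}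

/-- The set of singular vectors of a quadratic form (the zero vector included), i.e. the affine cone
over the quadric. -/
def singularVectors (Q : QuadraticForm F V) : Set V :=
  {v | Q v = 0}

theorem mem_singularVectors {v : V} : v ∈ singularVectors Q ↔ Q v = 0 :=
  Iff.rfl

theorem mem_subPerp {v : V} : v ∈ subPerp Q G ↔ ∀ g ∈ G, QuadraticMap.polar Q g v = 0 := by
  simp [subPerp, vecPerp]

theorem subPerp_eq_orthogonal :
    subPerp Q G = LinearMap.BilinForm.orthogonal (QuadraticMap.polarBilin Q) G :=
  Submodule.ext fun _ => mem_subPerp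

theorem bddAbove_finrank_isTotallySingular [FiniteDimensional F V] (Q : QuadraticForm F V) :
    BddAbove {n : ℕ | ∃ W : Submodule F V, IsTotallySingular Q W ∧ finrank F W = n} := by
  refine ⟨finrank F V, ?_⟩
  rintro _ ⟨W, -, rfl⟩
  exact W.finrank_le

namespace IsTotallySingular

theorem polar_eq_zero (hG : IsTotallySingular Q G) {g h : V} (hg : g ∈ G) (hh : h ∈ G) :
    QuadraticMap.polar Q g h = 0 := by
  rw [QuadraticMap.polar, hG _ (G.add_mem hg hh), hG g hg, hG h hh, sub_zero, sub_zero]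

theorem le_subPerp (hG : IsTotallySingular Q G) : G ≤ subPerp Q G :=
  fun _ hh => mem_subPerp.2 fun _ hg => hG.polar_eq_zero hg hh

theorem sup_span_singleton (hG : IsTotallySingular Q G) {v : V} (hv : Q v = 0)
    (hperp : v ∈ subPerp Q G) : IsTotallySingular Q (G ⊔ F ∙ v) := by
  intro x hx
  obtain ⟨g, hg, y, hy, rfl⟩ := mem_sup.1 hx
  obtain ⟨c, rfl⟩ := mem_span_singleton.1 hy
  rw [QuadraticMap.map_add Q, hG g hg, QuadraticMap.map_smul, hv,
    QuadraticMap.polar_smul_right, mem_subPerp.1 hperp g hg, smul_zero, smul_zero, add_zero,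
    add_zero]

theorem finrank_le_wittIndex [FiniteDimensional F V] (hG : IsTotallySingular Q G) :
    finrank F G ≤ wittIndex Q :=
  le_csSup (bddAbove_finrank_isTotallySingular Q) ⟨G, hG, rfl⟩

theorem inf_ker_polarBilin_eq_bot (hQ : QuadNondeg Q) (hG : IsTotallySingular Q G) :
    G ⊓ LinearMap.ker (QuadraticMap.polarBilin Q) = ⊥ := by
  refine (Submodule.eq_bot_iff _).2 fun v hv => hQ v (hG v hv.1) fun x => ?_
  exact LinearMap.congr_fun (LinearMap.mem_ker.1 hv.2) x

theorem finrank_add_finrank_subPerp [FiniteDimensional F V] (hQ : QuadNondeg Q)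
    (hG : IsTotallySingular Q G) : finrank F G + finrank F (subPerp Q G) = finrank F V := by
  have h := LinearMap.BilinForm.finrank_add_finrank_orthogonal' (B := QuadraticMap.polarBilin Q) G
  rwa [hG.inf_ker_polarBilin_eq_bot hQ, finrank_bot, add_zero, ← subPerp_eq_orthogonal] at h

theorem exists_translationInvariant_polar_eq_one (hG : IsTotallySingular Q G) :
    ∃ γ : V → G, (∀ v ∉ subPerp Q G, QuadraticMap.polar Q v (γ v) = 1) ∧
      ∀ v, ∀ g ∈ G, γ (v + g) = γ v := by
  let φ : V →ₗ[F] Dual F G := (QuadraticMap.polarBilin Q).domRestrict₂ G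
  have φ_apply (v : V) (g : G) : φ v g = QuadraticMap.polar Q v g := rfl
  have exists_eq_one (f : Dual F G) (hf : f ≠ 0) : ∃ g, f g = 1 := LinearMap.surjective hf 1
  -- `γ` is chosen as a function of the functional `φ v`, which is constant along `v + G`.
  choose! γ hγ using exists_eq_one
  refine ⟨fun v => γ (φ v), fun v hv => hγ (φ v) fun hφ => hv ?_, fun v g hg => ?_⟩
  · refine mem_subPerp.2 fun g hg => ?_
    rw [QuadraticMap.polar_comm, ← φ_apply v ⟨g, hg⟩, hφ, LinearMap.zero_apply]
  · have hφ : φ g = 0 := LinearMap.ext fun h => hG.polar_eq_zero hg h.2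
    simp only [map_add, hφ, add_zero]

theorem ncard_compl_subPerp (hG : IsTotallySingular Q G) :
    ((subPerp Q G : Set V)ᶜ).ncard =
      (singularVectors Q \ subPerp Q G).ncard * Nat.card F := by
  obtain ⟨γ, hγ, hγ_add⟩ := hG.exists_translationInvariant_polar_eq_one
  have γ_add (v : V) (c : F) : γ (v + c • (γ v : V)) = γ v :=
    hγ_add v _ (G.smul_mem c (γ v).2)
  have Q_add {v : V} (hv : v ∉ subPerp Q G) (c : F) : Q (v + c • (γ v : V)) = Q v + c := by
    rw [QuadraticMap.map_add Q, QuadraticMap.map_smul, hG _ (γ v).2,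
      QuadraticMap.polar_smul_right, hγ v hv, smul_zero, add_zero, smul_eq_mul, mul_one]
  have notMem_add {v : V} (hv : v ∉ subPerp Q G) (c : F) : v + c • (γ v : V) ∉ subPerp Q G :=
    fun h => hv (((subPerp Q G).add_mem_iff_left
      (hG.le_subPerp (G.smul_mem c (γ v).2))).1 h)
  let e : ↥((subPerp Q G : Set V)ᶜ) ≃ ↥(singularVectors Q \ subPerp Q G) × F :=
    { toFun v := (⟨v + (-Q v) • (γ v : V),
        (Q_add v.2 _).trans (add_neg_cancel _), notMem_add v.2 _⟩, Q v)
      invFun := fun (u, c) => ⟨u + c • (γ u : V), notMem_add u.2.2 c⟩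
      left_inv v := Subtype.ext <| by simp only [γ_add]; module
      right_inv := fun (u, c) => by
        have hQ : Q (u + c • (γ u : V)) = c := by
          rw [Q_add u.2.2, mem_singularVectors.1 u.2.1, zero_add]
        refine Prod.ext (Subtype.ext ?_) hQ
        simp only [γ_add, hQ]
        module }
  rw [← Nat.card_coe_set_eq, ← Nat.card_coe_set_eq, Nat.card_congr e, Nat.card_prod]

end IsTotallySingular

theorem ncard_coe_submodule [FiniteDimensional F V] (U : Submodule F V) :
    (U : Set V).ncard = Nat.card F ^ finrank F U :=
  (Nat.card_coe_set_eq (U : Set V)).symm.trans (natCard_eq_pow_finrank (V := U))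

theorem exists_isGenerator [FiniteDimensional F V] (Q : QuadraticForm F V) :
    ∃ G : Submodule F V, IsGenerator Q G := by
  have hbot : IsTotallySingular Q (⊥ : Submodule F V) := by simp [IsTotallySingular]
  have hne : {n : ℕ | ∃ W : Submodule F V, IsTotallySingular Q W ∧ finrank F W = n}.Nonempty :=
    ⟨0, ⊥, hbot, finrank_bot F V⟩
  exact Nat.sSup_mem hne (bddAbove_finrank_isTotallySingular Q)

namespace IsGenerator

variable [FiniteDimensional F V]

theorem ncard_eq (hG : IsGenerator Q G) : (G : Set V).ncard = Nat.card F ^ wittIndex Q := by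
  rw [ncard_coe_submodule, hG.2]

theorem mem_of_mem_subPerp (hG : IsGenerator Q G) {v : V} (hv : Q v = 0)
    (hperp : v ∈ subPerp Q G) : v ∈ G := by
  have hle := (hG.1.sup_span_singleton hv hperp).finrank_le_wittIndex
  rw [← hG.2] at hle
  rw [eq_of_le_of_finrank_le le_sup_left hle]
  exact mem_sup_right (mem_span_singleton_self v)

theorem singularVectors_inter_subPerp (hG : IsGenerator Q G) :
    singularVectors Q ∩ subPerp Q G = G :=
  Set.Subset.antisymm (fun _ hv => hG.mem_of_mem_subPerp hv.1 hv.2)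
    (Set.subset_inter hG.1 hG.1.le_subPerp)

theorem ncard_singularVectors [Finite F] (hG : IsGenerator Q G) :
    Nat.card F * (singularVectors Q).ncard + (subPerp Q G : Set V).ncard =
      Nat.card V + Nat.card F * (G : Set V).ncard := by
  have : Finite V := finite_of_finite F
  have hsplit := Set.ncard_inter_add_ncard_sdiff_eq_ncard (singularVectors Q) (subPerp Q G)
  rw [hG.singularVectors_inter_subPerp] at hsplit
  rw [← hsplit, ← Set.ncard_add_ncard_compl (subPerp Q G : Set V), hG.1.ncard_compl_subPerp]
  ring

end IsGenerator

theorem QuadNondeg.ncard_singularVectors [Finite F] [FiniteDimensional F V] (hQ : QuadNondeg Q)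
    {e : ℕ} (he : finrank F V = 2 * wittIndex Q + e) :
    Nat.card F * (singularVectors Q).ncard + Nat.card F ^ (wittIndex Q + e) =
      Nat.card F ^ (2 * wittIndex Q + e) + Nat.card F ^ (wittIndex Q + 1) := by
  obtain ⟨G, hG⟩ := exists_isGenerator Q
  have hperp : finrank F (subPerp Q G) = wittIndex Q + e := by
    have := hG.1.finrank_add_finrank_subPerp hQ
    rw [hG.2] at this
    omega
  have hcount := hG.ncard_singularVectors
  rwa [hG.ncard_eq, ncard_coe_submodule, hperp, natCard_eq_pow_finrank (K := F) (V := V), he,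
    ← pow_succ'] at hcount

theorem ncard_singularVectors_comp_subtype (Q : QuadraticForm F V) (U : Submodule F V) :
    (singularVectors (Q.comp U.subtype)).ncard = (singularVectors Q ∩ U).ncard := by
  rw [← Set.ncard_image_of_injective _ U.injective_subtype]
  congr 1
  ext v
  simp [singularVectors]

theorem finrank_inf_add_one_of_not_le [FiniteDimensional F V]
    (hW : finrank F W + 1 = finrank F V) (hGW : ¬ G ≤ W) :
    finrank F (G ⊓ W : Submodule F V) + 1 = finrank F G := by
  have hsum := finrank_sup_add_finrank_inf_eq G W
  have hlt := finrank_lt_finrank_of_lt (right_lt_sup.2 hGW)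
  have hle := (G ⊔ W).finrank_le
  omega

namespace IsSpread

variable {S : Set (Submodule F V)}

theorem singularVectors_inter_sdiff_zero (hS : IsSpread Q S) (U : Submodule F V) :
    (singularVectors Q ∩ U) \ {0} = ⋃ G ∈ S, ((G ⊓ U : Submodule F V) : Set V) \ {0} := by
  ext v
  simp only [Set.mem_iUnion₂, Set.mem_sdiff, Set.mem_inter_iff, SetLike.mem_coe, mem_inf]
  constructor
  · rintro ⟨⟨hv, hvU⟩, hv0⟩
    obtain ⟨G, hGS, hvG⟩ := hS.2.2 v hv
    exact ⟨G, hGS, ⟨hvG, hvU⟩, hv0⟩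
  · rintro ⟨G, hGS, ⟨hvG, hvU⟩, hv0⟩
    exact ⟨⟨(hS.1 G hGS).1 v hvG, hvU⟩, hv0⟩

theorem pairwiseDisjoint_inf_sdiff_zero (hS : IsSpread Q S) (U : Submodule F V) :
    S.PairwiseDisjoint fun G => ((G ⊓ U : Submodule F V) : Set V) \ {0} := by
  intro G hG H hH hne
  refine Set.disjoint_left.2 fun v hvG hvH => hvG.2 ?_
  have hv : v ∈ G ⊓ H := ⟨hvG.1.1, hvH.1.1⟩
  rwa [hS.2.1 G hG H hH hne] at hv

theorem ncard_singularVectors_inter_add_card [Finite V] {T : Finset (Submodule F V)}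
    (hT : IsSpread Q (T : Set (Submodule F V))) (U : Submodule F V) :
    (singularVectors Q ∩ U).ncard + T.card =
      ∑ G ∈ T, ((G ⊓ U : Submodule F V) : Set V).ncard + 1 := by
  have hzero : (0 : V) ∈ singularVectors Q ∩ U := ⟨QuadraticMap.map_zero Q, U.zero_mem⟩
  have hunion := T.finite_toSet.ncard_biUnion (fun _ _ => Set.toFinite _)
    (hT.pairwiseDisjoint_inf_sdiff_zero U)
  rw [← hT.singularVectors_inter_sdiff_zero, finsum_mem_coe_finset] at hunion
  rw [← Set.ncard_sdiff_singleton_add_one hzero, hunion, add_right_comm, Finset.card_eq_sum_ones,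
    ← Finset.sum_add_distrib]
  congr 1
  exact Finset.sum_congr rfl fun G _ => Set.ncard_sdiff_singleton_add_one (G ⊓ U).zero_mem

variable [Finite F] [FiniteDimensional F V]

theorem ncard_singularVectors_add_ncard (hS : IsSpread Q S) :
    (singularVectors Q).ncard + S.ncard = S.ncard * Nat.card F ^ wittIndex Q + 1 := by
  have : Finite V := finite_of_finite F
  lift S to Finset (Submodule F V) using S.toFinite
  have hcount := hS.ncard_singularVectors_inter_add_card ⊤
  simp only [top_coe, Set.inter_univ, inf_top_eq] at hcount
  rwa [Finset.sum_congr rfl fun G hG => (hS.1 G hG).ncard_eq, Finset.sum_const, smul_eq_mul,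
    ← Set.ncard_coe_finset] at hcount

theorem ncard_singularVectors_inter_hyperplane_add_ncard (hS : IsSpread Q S)
    (hW : finrank F W + 1 = finrank F V) :
    Nat.card F * ((singularVectors Q ∩ W).ncard + S.ncard) +
        {G ∈ S | G ≤ W}.ncard * Nat.card F ^ wittIndex Q =
      S.ncard * Nat.card F ^ wittIndex Q +
        {G ∈ S | G ≤ W}.ncard * Nat.card F ^ (wittIndex Q + 1) + Nat.card F := by
  classical
  have : Finite V := finite_of_finite F
  lift S to Finset (Submodule F V) using S.toFinite
  have hfilter : {G ∈ (S : Set (Submodule F V)) | G ≤ W}.ncard = (S.filter (· ≤ W)).card := by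
    rw [← Set.ncard_coe_finset, Finset.coe_filter]
    rfl
  have hmember : ∀ G ∈ S, Nat.card F * ((G ⊓ W : Submodule F V) : Set V).ncard +
      (if G ≤ W then Nat.card F ^ wittIndex Q else 0) =
        Nat.card F ^ wittIndex Q + if G ≤ W then Nat.card F ^ (wittIndex Q + 1) else 0 := by
    intro G hG
    by_cases hGW : G ≤ W
    · rw [inf_eq_left.2 hGW, (hS.1 G hG).ncard_eq, if_pos hGW, if_pos hGW]
      ring
    · rw [ncard_coe_submodule, if_neg hGW, if_neg hGW, ← (hS.1 G hG).2,
        ← finrank_inf_add_one_of_not_le hW hGW, pow_succ']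
  have hsum := Finset.sum_congr rfl hmember
  simp only [Finset.sum_add_distrib, ← Finset.mul_sum, ← Finset.sum_filter, Finset.sum_const,
    smul_eq_mul] at hsum
  rw [hfilter, Set.ncard_coe_finset, hS.ncard_singularVectors_inter_add_card W]
  linear_combination hsum

theorem ncard_eq (hS : IsSpread Q S) (hQ : QuadNondeg Q) {e : ℕ}
    (he : finrank F V = 2 * wittIndex Q + e + 1) (hw : wittIndex Q ≠ 0) :
    S.ncard = Nat.card F ^ (wittIndex Q + e) + 1 := by
  have hsingular := hQ.ncard_singularVectors (e := e + 1) he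
  have hspread := hS.ncard_singularVectors_add_ncard
  have hF : 1 < Nat.card F := Finite.one_lt_card
  have hpow : 1 < Nat.card F ^ wittIndex Q := Nat.one_lt_pow hw hF
  zify at hsingular hspread hF hpow ⊢
  have hne : (Nat.card F : ℤ) * (Nat.card F ^ wittIndex Q - 1) ≠ 0 :=
    mul_ne_zero (by lia) (by lia)
  refine mul_left_cancel₀ hne ?_
  linear_combination hsingular - Nat.card F * hspread

end IsSpread

-- `V` has Witt defect `e + 1` and `W` has Witt defect `e`, so besides the elliptic case `e = 1`
-- this covers the hyperbolic hyperplane sections of a parabolic quadric, `e = 0`.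
theorem elliptic_spread_parabolic_section_general [Finite F] [FiniteDimensional F V]
    (hQ : QuadNondeg Q) {e : ℕ} (he : finrank F V = 2 * wittIndex Q + e + 1)
    (hw : wittIndex Q ≠ 0) {S : Set (Submodule F V)} (hS : IsSpread Q S)
    (hW : finrank F W + 1 = finrank F V) (hWQ : QuadNondeg (Q.comp W.subtype))
    (hWw : wittIndex (Q.comp W.subtype) = wittIndex Q) :
    {G ∈ S | G ≤ W}.ncard = Nat.card F ^ e + 1 := by
  have hsize := hS.ncard_eq hQ he hw
  have hsection := hWQ.ncard_singularVectors (e := e) (by omega)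
  rw [hWw, ncard_singularVectors_comp_subtype] at hsection
  have hspread := hS.ncard_singularVectors_inter_hyperplane_add_ncard hW
  have hF : 1 < Nat.card F := Finite.one_lt_card
  zify at hsize hsection hspread hF ⊢
  have hne : (Nat.card F : ℤ) ^ wittIndex Q * (Nat.card F - 1) ≠ 0 :=
    mul_ne_zero (pow_ne_zero _ (by lia)) (by lia)
  refine mul_left_cancel₀ hne ?_
  linear_combination hsection - hspread + (Nat.card F - Nat.card F ^ wittIndex Q) * hsize

end Development

theorem elliptic_spread_parabolic_section {F : Type*} [Field F] [Fintype F] (r : ℕ)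
    (hr : 0 < r) (hrodd : r % 2 = 1)
    (V : Type*) [AddCommGroup V] [Module F V] [FiniteDimensional F V]
    (hdim : Module.finrank F V = r + 3)
    (Q : QuadraticForm F V) (hQnd : QuadNondeg Q)
    (hdef : Module.finrank F V = 2 * wittIndex Q + 2)
    (S : Set (Submodule F V)) (hS : IsSpread Q S)
    (W : Submodule F V) (hW : Module.finrank F ↥W = r + 2)
    (hWnd : QuadNondeg (Q.comp W.subtype))
    (hWdef : Module.finrank F ↥W = 2 * wittIndex (Q.comp W.subtype) + 1) :
    {G ∈ S | G ≤ W}.ncard = Fintype.card F + 1 := by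
  simpa using elliptic_spread_parabolic_section_general (e := 1) hQnd hdef (by omega) hS
    (by omega) hWnd (by omega)
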